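/- Let P be a simple polytope of dimension d > 1 with precisely 2d facets. Then the total number of unordered pairs of complementary vertices of P is even. -/

import Mathlib

/-!
Index every vertex `v` by the set `A v` of the `d` facets through it. As there are `2d` facets,
`u` and `v` are complementary exactly when `A v` is the complement of `A u`. Two ingredients give
the parity.

*Geometry* (`edge_vertices`). For a set `R` of `d - 1` facets, the number of vertices `v` with
`R ⊆ A v` is `0` or `2`. Translate a vertex `v` to the origin, and let `D` be the cone of
functionals on the direction space of `P` that are nonpositive on all generators `s - v`. Every
element of `D` is a nonnegative combination of functionals defining facets through `v`
(`cone_induction`: a functional whose tight generators do not span a hyperplane lies strictly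
between two elements of `D` with more tight generators). As `v` is a vertex, `D` spans the dual
space, so the `d` facet functionals at `v` form a basis of it. Hence dropping one of the facets
leaves a line, and linear independence shows that the line contains a further point of `P`
(`simple_cone`). So the facets in `R` meet in an edge, whose vertices are `v` and the generator
farthest from `v`.

*Combinatorics* (`even_complementary`). Fix a facet `x` and list every complementary pair as
`(v, w)` with `x ∉ A v`. For given `v` with `x ∉ A v`, the vertices `w` with
`(A v)ᶜ \ {x} ⊆ A w` are even in number; they satisfy either `A w = (A v)ᶜ`, or `x ∉ A w` and
`A v ∪ A w = {x}ᶜ`. Summing over `v`, the number of complementary pairs has the parity of the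
number of ordered pairs `(v, w)` with `x ∉ A v`, `x ∉ A w` and `A v ∪ A w = {x}ᶜ`. This relation is
symmetric, and it is irreflexive because `d < 2d - 1`, so that number is even.
-/

/-- `P` is a polytope: the convex hull of finitely many points. -/
def IsPolytope {n : ℕ} (P : Set (Fin n → ℝ)) : Prop :=
  ∃ S : Finset (Fin n → ℝ), P = convexHull ℝ (S : Set (Fin n → ℝ))

/-- A face of `P`: the empty set, `P` itself, or the intersection of `P`
with a supporting hyperplane. -/
def IsFace {n : ℕ} (P F : Set (Fin n → ℝ)) : Prop :=
  F = ∅ ∨ F = P ∨ ∃ (f : (Fin n → ℝ) →ₗ[ℝ] ℝ) (c : ℝ),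
    (∀ x ∈ P, f x ≤ c) ∧ F = {x ∈ P | f x = c}

/-- The dimension of a subset of `ℝⁿ`: the rank of its vector span
(i.e., its affine dimension). -/
noncomputable def sdim {n : ℕ} (F : Set (Fin n → ℝ)) : ℕ :=
  Module.finrank ℝ ↥(vectorSpan ℝ F)

/-- A vertex of `P`: a point whose singleton is a (0-dimensional) face of `P`. -/
def IsVertex {n : ℕ} (P : Set (Fin n → ℝ)) (v : Fin n → ℝ) : Prop :=
  IsFace P {v}

/-- A facet of `P`: a nonempty face of dimension `dim P - 1`. -/
def IsFacet {n : ℕ} (P F : Set (Fin n → ℝ)) : Prop :=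
  IsFace P F ∧ F.Nonempty ∧ sdim F + 1 = sdim P

/-- An edge of `P`: a face of dimension 1. -/
def IsEdge {n : ℕ} (P F : Set (Fin n → ℝ)) : Prop :=
  IsFace P F ∧ sdim F = 1

/-- Two vertices are adjacent if they are joined by an edge. -/
def Adjacent {n : ℕ} (P : Set (Fin n → ℝ)) (u v : Fin n → ℝ) : Prop :=
  u ≠ v ∧ ∃ F, IsEdge P F ∧ u ∈ F ∧ v ∈ F

/-- A polytope is simple if every vertex belongs to precisely `dim P` facets. -/
def IsSimplePolytope {n : ℕ} (P : Set (Fin n → ℝ)) : Prop :=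
  ∀ v, IsVertex P v → {F | IsFacet P F ∧ v ∈ F}.ncard = sdim P

/-- A polytope is simplicial if every facet contains precisely `dim P` vertices. -/
def IsSimplicialPolytope {n : ℕ} (P : Set (Fin n → ℝ)) : Prop :=
  ∀ F, IsFacet P F → {v | IsVertex P v ∧ v ∈ F}.ncard = sdim P

/-- Two vertices are complementary if no facet contains both. -/
def Complementary {n : ℕ} (P : Set (Fin n → ℝ)) (u v : Fin n → ℝ) : Prop :=
  ∀ F, IsFacet P F → ¬ (u ∈ F ∧ v ∈ F)

/-- `J` is the join `F ∨ G`: the smallest face of `P` containing both `F` and `G`. -/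
def IsJoin {n : ℕ} (P F G J : Set (Fin n → ℝ)) : Prop :=
  IsFace P J ∧ F ⊆ J ∧ G ⊆ J ∧ ∀ J', IsFace P J' → F ⊆ J' → G ⊆ J' → J ⊆ J'

/-! ### The cone of functionals nonpositive on a finite set -/

/-- Ratio test: starting at `f` and moving in direction `g` until a first new constraint becomes
tight. The constraints already tight at `f` stay so. -/
theorem exists_step {V : Type*} [AddCommGroup V] [Module ℝ V] (T : Finset V)
    (f g : Module.Dual ℝ V) (hf : ∀ t ∈ T, f t ≤ 0) (hfg : ∀ t ∈ T, f t = 0 → g t = 0)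
    (hg : ∃ t ∈ T, 0 < g t) :
    ∃ a : ℝ, 0 < a ∧ (∀ t ∈ T, (f + a • g) t ≤ 0) ∧ ∃ t ∈ T, f t ≠ 0 ∧ (f + a • g) t = 0 := by
  obtain ⟨t₁, ht₁, hg₁⟩ := hg
  obtain ⟨t₀, ht₀, hmin⟩ := (T.filter (fun t => 0 < g t)).exists_min_image
    (fun t => - f t / g t) ⟨t₁, by simp [ht₁, hg₁]⟩
  rw [Finset.mem_filter] at ht₀
  have hne : f t₀ ≠ 0 := fun h => ht₀.2.ne' (hfg _ ht₀.1 h)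
  have hlt : f t₀ < 0 := lt_of_le_of_ne (hf _ ht₀.1) hne
  refine ⟨- f t₀ / g t₀, div_pos (by linarith) ht₀.2, fun t ht => ?_, t₀, ht₀.1, hne, ?_⟩
  · simp only [LinearMap.add_apply, LinearMap.smul_apply, smul_eq_mul]
    have ha : 0 < - f t₀ / g t₀ := div_pos (by linarith) ht₀.2
    rcases le_or_gt (g t) 0 with h | h
    · have := hf t ht
      nlinarith
    · have h1 := hmin t (by simp [ht, h])
      rw [le_div_iff₀ h] at h1
      linarith
  · have := ht₀.2.ne'
    simp only [LinearMap.add_apply, LinearMap.smul_apply, smul_eq_mul]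
    field_simp
    ring

/-- Induction over the cone of functionals nonpositive on a finite spanning set `T`: the cone is
generated by its facet functionals, the nonzero elements whose tight vectors span a hyperplane. -/
theorem cone_induction {V : Type*} [AddCommGroup V] [Module ℝ V] [FiniteDimensional ℝ V]
    (T : Finset V) (hT : Submodule.span ℝ (T : Set V) = ⊤) (p : Module.Dual ℝ V → Prop)
    (h0 : p 0) (hadd : ∀ f g, p f → p g → p (f + g)) (hsmul : ∀ (a : ℝ) f, 0 ≤ a → p f → p (a • f))
    (hfac : ∀ f : Module.Dual ℝ V, f ≠ 0 → (∀ t ∈ T, f t ≤ 0) →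
      Module.finrank ℝ (Submodule.span ℝ {t | t ∈ T ∧ f t = 0}) + 1 = Module.finrank ℝ V → p f)
    (f : Module.Dual ℝ V) (hf : ∀ t ∈ T, f t ≤ 0) : p f := by
  induction hk : (T.filter (fun t => f t ≠ 0)).card using Nat.strong_induction_on generalizing f with
  | _ k ih =>
  by_cases hf0 : f = 0
  · exact hf0 ▸ h0
  by_cases hfr : Module.finrank ℝ (Submodule.span ℝ {t | t ∈ T ∧ f t = 0}) + 1 = Module.finrank ℝ V
  · exact hfac f hf0 hf hfr
  -- a functional is determined by its values on `T`
  have hext : ∀ g : Module.Dual ℝ V, (∀ t ∈ T, g t = 0) → g = 0 := fun g hg =>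
    LinearMap.ext_on hT (fun t ht => by simpa using hg t ht)
  set W := Submodule.span ℝ {t | t ∈ T ∧ f t = 0} with hW
  obtain ⟨g₀, hg₀W, hg₀⟩ : ∃ g₀ ∈ W.dualAnnihilator, g₀ ∉ Submodule.span ℝ {f} := by
    by_contra! hcon
    have h1 := Submodule.finrank_mono (show W.dualAnnihilator ≤ Submodule.span ℝ {f} from hcon)
    have h2 := Subspace.finrank_add_finrank_dualAnnihilator_eq W
    rw [finrank_span_singleton hf0] at h1
    have h3 : W ≤ LinearMap.ker f := Submodule.span_le.2 (fun t ht => ht.2)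
    have h4 := Submodule.finrank_lt (s := W) (fun htop => hf0 (by
      rw [htop, top_le_iff, LinearMap.ker_eq_top] at h3; exact h3))
    omega
  have hg₀T : ∀ t ∈ T, f t = 0 → g₀ t = 0 := fun t ht h =>
    (Submodule.mem_dualAnnihilator g₀).1 hg₀W t (Submodule.subset_span ⟨ht, h⟩)
  have hfu : ∑ t ∈ T, f t ≠ 0 := fun h => hf0 (hext f ((Finset.sum_eq_zero_iff_of_nonpos hf).1 h))
  -- subtracting a multiple of `f` makes the values of `g` on `T` sum to zero
  set b := (∑ t ∈ T, g₀ t) / ∑ t ∈ T, f t with hb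
  set g := g₀ - b • f with hg
  have hgu : ∑ t ∈ T, g t = 0 := by
    simp only [hg, LinearMap.sub_apply, LinearMap.smul_apply, smul_eq_mul, Finset.sum_sub_distrib,
      ← Finset.mul_sum, hb]
    field_simp
    ring
  have hgne : g ≠ 0 := fun h => hg₀ (Submodule.mem_span_singleton.2 ⟨b, (sub_eq_zero.1 h).symm⟩)
  have hgT : ∀ t ∈ T, f t = 0 → g t = 0 := fun t ht h => by simp [hg, h, hg₀T t ht h]
  have hpos : ∃ t ∈ T, 0 < g t := by
    by_contra! h
    exact hgne (hext g ((Finset.sum_eq_zero_iff_of_nonpos h).1 hgu))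
  have hneg : ∃ t ∈ T, 0 < (-g) t := by
    by_contra! h
    refine hgne (hext g ((Finset.sum_eq_zero_iff_of_nonneg fun t ht => ?_).1 hgu))
    have := h t ht
    simp only [LinearMap.neg_apply] at this
    linarith
  have key : ∀ g' : Module.Dual ℝ V, (∀ t ∈ T, f t = 0 → g' t = 0) →
      (∃ t ∈ T, 0 < g' t) → ∃ a : ℝ, 0 < a ∧ p (f + a • g') := by
    intro g' h1 h2
    obtain ⟨a, ha, hD, t₀, ht₀, hft₀, hz⟩ := exists_step T f g' hf h1 h2
    refine ⟨a, ha, ih _ ?_ _ hD rfl⟩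
    rw [← hk]
    refine Finset.card_lt_card ⟨fun t ht => ?_, fun hsub => ?_⟩
    · rw [Finset.mem_filter] at ht ⊢
      exact ⟨ht.1, fun h => ht.2 (by simp [h, h1 t ht.1 h])⟩
    · exact (Finset.mem_filter.1 (hsub (Finset.mem_filter.2 ⟨ht₀, hft₀⟩))).2 hz
  obtain ⟨a, ha, hpa⟩ := key g hgT hpos
  obtain ⟨c, hc, hpc⟩ := key (-g) (fun t ht h => by simp [hgT t ht h]) hneg
  have hfe : f = (c / (a + c)) • (f + a • g) + (a / (a + c)) • (f + c • (-g)) := by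
    ext x
    simp only [LinearMap.add_apply, LinearMap.smul_apply, smul_eq_mul, LinearMap.neg_apply]
    field_simp
    ring
  rw [hfe]
  exact hadd _ _ (hsmul _ _ (by positivity) hpa) (hsmul _ _ (by positivity) hpc)

/-- A functional nonpositive on a finite set becomes negative off `0` after adding a small multiple
of a functional that is negative wherever the first one vanishes. -/
theorem exists_perturb {V : Type*} [AddCommGroup V] [Module ℝ V] (T : Finset V)
    (f g : Module.Dual ℝ V) (hf : ∀ t ∈ T, f t ≤ 0) (hfg : ∀ t ∈ T, t ≠ 0 → f t = 0 → g t < 0) :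
    ∃ a : ℝ, 0 < a ∧ ∀ t ∈ T, t ≠ 0 → (f + a • g) t < 0 := by
  have : ∀ t ∈ T, ∀ᶠ a in nhdsWithin (0:ℝ) (Set.Ioi 0), t ≠ 0 → (f + a • g) t < 0 := by
    intro t ht
    by_cases ht0 : t = 0
    · simp [ht0]
    by_cases h : f t = 0
    · filter_upwards [self_mem_nhdsWithin] with a ha _
      simpa [h] using mul_neg_of_pos_of_neg (Set.mem_Ioi.1 ha) (hfg t ht ht0 h)
    · have hlt := lt_of_le_of_ne (hf t ht) h
      have hc : Filter.Tendsto (fun a : ℝ => (f + a • g) t) (nhdsWithin 0 (Set.Ioi 0))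
          (nhds (f t)) := by
        have : Continuous (fun a : ℝ => f t + a * g t) := by fun_prop
        simpa using (this.tendsto 0).mono_left nhdsWithin_le_nhds
      filter_upwards [hc.eventually_lt_const hlt] with a ha _ using ha
  have h2 := ((Finset.eventually_all T).2 this).and self_mem_nhdsWithin
  obtain ⟨a, h, ha⟩ := h2.exists
  exact ⟨a, ha, h⟩

/-- Local structure at a simple vertex. `T` generates a pointed full-dimensional cone (`g` witnesses
pointedness), and the number of functionals `φ i` equals the dimension, while each facet of the cone
is defined by one of them. Then the `φ i` separate points, and for each `j` some generator lies on
the ray where all `φ i` with `i ≠ j` vanish. -/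
theorem simple_cone {V : Type*} [AddCommGroup V] [Module ℝ V] [FiniteDimensional ℝ V]
    (T : Finset V) (hT : Submodule.span ℝ (T : Set V) = ⊤)
    (g : Module.Dual ℝ V) (hg : ∀ t ∈ T, t ≠ 0 → g t < 0)
    {ι : Type*} [Fintype ι] [DecidableEq ι] (φ : ι → Module.Dual ℝ V)
    (hφ : ∀ i, ∀ t ∈ T, φ i t ≤ 0) (hcard : Fintype.card ι = Module.finrank ℝ V)
    (hfac : ∀ f : Module.Dual ℝ V, f ≠ 0 → (∀ t ∈ T, f t ≤ 0) →
      Module.finrank ℝ (Submodule.span ℝ {t | t ∈ T ∧ f t = 0}) + 1 = Module.finrank ℝ V →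
      ∃ i, φ i ≠ 0 ∧ ∀ t ∈ T, f t = 0 → φ i t = 0) :
    (∀ x, (∀ i, φ i x = 0) → x = 0) ∧
    ∀ j, ∃ t ∈ T, (∀ i, i ≠ j → φ i t = 0) ∧ φ j t < 0 := by
  have hext : ∀ g : Module.Dual ℝ V, (∀ t ∈ T, g t = 0) → g = 0 := fun g hg =>
    LinearMap.ext_on hT (fun t ht => by simpa using hg t ht)
  have hcone : ∀ f : Module.Dual ℝ V, (∀ t ∈ T, f t ≤ 0) →
      ∃ c : ι → ℝ, (∀ i, 0 ≤ c i) ∧ f = ∑ i, c i • φ i := by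
    refine cone_induction T hT _ ⟨0, by simp⟩ ?_ ?_ ?_
    · rintro _ _ ⟨c, hc, rfl⟩ ⟨c', hc', rfl⟩
      exact ⟨c + c', fun i => add_nonneg (hc i) (hc' i), by simp [add_smul, Finset.sum_add_distrib]⟩
    · rintro a _ ha ⟨c, hc, rfl⟩
      exact ⟨a • c, fun i => mul_nonneg ha (hc i), by simp [Finset.smul_sum, mul_smul]⟩
    · intro f hf0 hf hfr
      obtain ⟨i, hi0, hi⟩ := hfac f hf0 hf hfr
      set W := Submodule.span ℝ {t | t ∈ T ∧ f t = 0} with hW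
      -- the annihilator of the tight hyperplane is a line, containing both `f` and `φ i`
      have h1 : f ∈ W.dualAnnihilator := by
        rw [Submodule.mem_dualAnnihilator]
        intro w hw
        have : W ≤ LinearMap.ker f := Submodule.span_le.2 (fun t ht => ht.2)
        exact this hw
      have h2 : φ i ∈ W.dualAnnihilator := by
        rw [Submodule.mem_dualAnnihilator]
        intro w hw
        have : W ≤ LinearMap.ker (φ i) := Submodule.span_le.2 (fun t ht => hi t ht.1 ht.2)
        exact this hw
      have h3 : Module.finrank ℝ W.dualAnnihilator = 1 := by
        have := Subspace.finrank_add_finrank_dualAnnihilator_eq W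
        omega
      obtain ⟨a, ha⟩ := (finrank_eq_one_iff_of_nonzero' (⟨φ i, h2⟩ : W.dualAnnihilator)
        (by simpa using hi0)).1 h3 ⟨f, h1⟩
      have ha : a • φ i = f := congrArg Subtype.val ha
      have ha0 : 0 ≤ a := by
        by_contra! hneg
        refine hf0 (hext f fun t ht => ?_)
        have h4 := hf t ht
        have h5 := hφ i t ht
        have h6 : a * φ i t = f t := by rw [← ha]; simp
        nlinarith
      refine ⟨Pi.single i a, fun k => ?_, ?_⟩
      · by_cases hk : k = i
        · subst hk; simpa using ha0
        · simp [hk]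
      · rw [Finset.sum_eq_single i] <;> simp +contextual [ha]
  have hspan : (⊤ : Submodule ℝ (Module.Dual ℝ V)) ≤ Submodule.span ℝ (Set.range φ) := by
    have hmem : ∀ f : Module.Dual ℝ V, (∀ t ∈ T, f t ≤ 0) → f ∈ Submodule.span ℝ (Set.range φ) := by
      intro f hf
      obtain ⟨c, -, rfl⟩ := hcone f hf
      exact Submodule.sum_mem _ fun i _ =>
        Submodule.smul_mem _ _ (Submodule.subset_span ⟨i, rfl⟩)
    have hle : ∀ f : Module.Dual ℝ V, (∀ t ∈ T, t ≠ 0 → f t < 0) → ∀ t ∈ T, f t ≤ 0 := by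
      intro f hf t ht
      by_cases h : t = 0
      · simp [h]
      · exact (hf t ht h).le
    intro h _
    obtain ⟨a, ha, hah⟩ := exists_perturb T g h (hle g hg)
      (fun t ht ht0 h0 => absurd h0 (hg t ht ht0).ne)
    have : h = a⁻¹ • ((g + a • h) - g) := by
      rw [add_sub_cancel_left, smul_smul, inv_mul_cancel₀ ha.ne', one_smul]
    rw [this]
    exact Submodule.smul_mem _ _ (Submodule.sub_mem _ (hmem _ (hle _ hah)) (hmem _ (hle _ hg)))
  have hli : LinearIndependent ℝ φ :=
    linearIndependent_of_top_le_span_of_card_eq_finrank hspan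
      (by rw [hcard, Subspace.dual_finrank_eq])
  have hker : ∀ x, (∀ i, φ i x = 0) → x = 0 := by
    intro x hx
    rw [← Module.forall_dual_apply_eq_zero_iff ℝ]
    intro f
    have : f ∈ Submodule.span ℝ (Set.range φ) := hspan trivial
    have hle : Submodule.span ℝ (Set.range φ) ≤ LinearMap.ker (Module.Dual.eval ℝ V x) := by
      rw [Submodule.span_le]
      rintro _ ⟨i, rfl⟩
      exact hx i
    exact hle this
  refine ⟨hker, fun j => ?_⟩
  by_contra! hcon
  -- otherwise `ψ` is negative on `T` off `0`, so `ψ - a φ j` is in the cone for a small `a > 0`, and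
  -- its expansion in the independent family `φ` has a negative coefficient at `j`
  set ψ := ∑ i ∈ Finset.univ.erase j, φ i with hψ
  have hψle : ∀ t ∈ T, ψ t ≤ 0 := fun t ht => by
    rw [hψ, LinearMap.sum_apply]
    exact Finset.sum_nonpos fun i _ => hφ i t ht
  obtain ⟨a, ha, hneg⟩ := exists_perturb T ψ (-φ j) hψle (by
    intro t ht ht0 h0
    rw [hψ, LinearMap.sum_apply, Finset.sum_eq_zero_iff_of_nonpos (fun i _ => hφ i t ht)] at h0
    have h1 : ∀ i, i ≠ j → φ i t = 0 := fun i hi => h0 i (by simp [hi])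
    refine absurd (hker t fun i => ?_) ht0
    by_cases hi : i = j
    · subst hi
      exact le_antisymm (hφ _ t ht) (hcon t ht h1)
    · exact h1 i hi)
  obtain ⟨c, hc, hsum⟩ := hcone (ψ + a • (-φ j)) (fun t ht => by
    by_cases h : t = 0
    · simp [h]
    · exact (hneg t ht h).le)
  have hlin : ∑ i, ((if i = j then -a else 1) - c i) • φ i = 0 := by
    ext x
    have hx := LinearMap.congr_fun hsum x
    simp only [hψ, LinearMap.add_apply, LinearMap.smul_apply, LinearMap.neg_apply,
      LinearMap.sum_apply, smul_eq_mul] at hx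
    simp only [LinearMap.sum_apply, LinearMap.smul_apply, smul_eq_mul, sub_mul,
      Finset.sum_sub_distrib, LinearMap.zero_apply, ← hx]
    have herase : ∑ i ∈ Finset.univ.erase j, (if i = j then -a else (1 : ℝ)) * φ i x =
        ∑ i ∈ Finset.univ.erase j, φ i x :=
      Finset.sum_congr rfl fun i hi => by simp [(Finset.mem_erase.1 hi).1]
    rw [← Finset.add_sum_erase _ _ (Finset.mem_univ j), herase, if_pos rfl]
    ring
  have := Fintype.linearIndependent_iff.1 hli _ hlin j
  simp only [if_true] at this
  have := hc j
  linarith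

/-! ### Parity of complementary pairs -/

/-- If every `(d - 1)`-subset of a `2d`-set lies in an even number of the `d`-sets `A v`, then the
number of pairs with `A w = (A v)ᶜ`, ordered so that `x ∉ A v`, is even. -/
theorem even_complementary {X V : Type*} [Fintype X] [DecidableEq X] [Fintype V] [DecidableEq V]
    {d : ℕ} (hd : 1 < d) (hX : Fintype.card X = 2 * d) (A : V → Finset X)
    (hA : ∀ v, (A v).card = d)
    (hR : ∀ R : Finset X, R.card + 1 = d → Even (Finset.univ.filter (fun v => R ⊆ A v)).card)
    (x : X) :
    Even (Finset.univ.filter (fun p : V × V => x ∉ A p.1 ∧ A p.2 = (A p.1)ᶜ)).card := by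
  set N := Finset.univ.filter (fun p : V × V => x ∉ A p.1 ∧ A p.2 = (A p.1)ᶜ)
  set M := Finset.univ.filter (fun p : V × V => x ∉ A p.1 ∧ x ∉ A p.2 ∧ A p.1 ∪ A p.2 = {x}ᶜ)
  have hM : Even M.card := by
    rw [← ZMod.natCast_eq_zero_iff_even, Finset.cast_card]
    refine Finset.sum_involution (fun p _ => p.swap) ?_ ?_ ?_ ?_
    · intro p _; exact CharTwo.add_self_eq_zero _
    · rintro ⟨v, w⟩ hp _ heq
      simp only [Prod.swap_prod_mk, Prod.mk.injEq] at heq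
      obtain ⟨rfl, -⟩ := heq
      have h := (Finset.mem_filter.1 hp).2.2.2
      have h2 := congrArg Finset.card h
      simp only [Finset.union_self, hA, Finset.card_compl, Finset.card_singleton, hX] at h2
      omega
    · rintro ⟨v, w⟩ hp
      simp only [M, Finset.mem_filter, Finset.mem_univ, true_and, Prod.swap_prod_mk] at hp ⊢
      exact ⟨hp.2.1, hp.1, by rw [Finset.union_comm]; exact hp.2.2⟩
    · intro p _; simp
  -- for each first component `v`, the second components occurring in `N` or `M` are precisely the
  -- `w` with `(A v)ᶜ \ {x} ⊆ A w`
  have hNM : Even (N.card + M.card) := by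
    have hdisj : Disjoint N M := by
      rw [Finset.disjoint_left]
      rintro ⟨v, w⟩ h1 h2
      simp only [N, M, Finset.mem_filter, Finset.mem_univ, true_and] at h1 h2
      exact h2.2.1 (by rw [h1.2]; simpa using h1.1)
    rw [← Finset.card_union_of_disjoint hdisj,
      Finset.card_eq_sum_card_fiberwise (f := Prod.fst) (t := Finset.univ) (by simp)]
    refine Finset.even_sum _ fun v _ => ?_
    by_cases hv : x ∈ A v
    · convert Even.zero (α := ℕ)
      rw [Finset.card_eq_zero, Finset.filter_eq_empty_iff]
      rintro ⟨v', w⟩ h rfl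
      simp only [N, M, Finset.mem_union, Finset.mem_filter, Finset.mem_univ, true_and] at h
      tauto
    have hxc : x ∈ (A v)ᶜ := by simpa using hv
    have hcc : (A v)ᶜ.card = d := by rw [Finset.card_compl, hX, hA]; omega
    refine (congrArg Even ?_).mpr
      (hR ((A v)ᶜ.erase x) (by rw [Finset.card_erase_of_mem hxc, hcc]; omega))
    refine Finset.card_bij' (fun p _ => p.2) (fun w _ => (v, w)) ?_ ?_ ?_ ?_
    · rintro ⟨v', w⟩ h
      simp only [N, M, Finset.mem_union, Finset.mem_filter, Finset.mem_univ, true_and] at h ⊢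
      obtain ⟨h, rfl⟩ := h
      rcases h with h | h
      · rw [h.2]; exact Finset.erase_subset _ _
      · intro y hy
        have hy2 : y ∈ A v' ∪ A w := by
          rw [h.2.2]; simpa using (Finset.mem_erase.1 hy).1
        simp only [Finset.mem_erase, Finset.mem_compl, Finset.mem_union] at hy hy2
        tauto
    · intro w hw
      simp only [N, M, Finset.mem_union, Finset.mem_filter, Finset.mem_univ, true_and, and_true]
        at hw ⊢
      by_cases hxw : x ∈ A w
      · left
        refine ⟨hv, (Finset.eq_of_subset_of_card_le ?_ (by rw [hA, hcc])).symm⟩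
        rw [← Finset.insert_erase hxc]
        exact Finset.insert_subset hxw hw
      · right
        refine ⟨hv, hxw, ?_⟩
        ext y
        have := @hw y
        simp only [Finset.mem_erase, Finset.mem_compl, Finset.mem_union,
          Finset.mem_singleton] at this ⊢
        constructor
        · rintro (h | h) rfl
          · exact hv h
          · exact hxw h
        · tauto
    · rintro ⟨v', w⟩ h
      simp only [Finset.mem_filter] at h
      rw [h.2]
    · simp
  exact (Nat.even_add.1 hNM).2 hM

/-! ### Faces of a polytope in terms of its generators -/

theorem face_convexHull {E : Type*} [AddCommGroup E] [Module ℝ E] (S : Finset E)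
    (f : E →ₗ[ℝ] ℝ) (c : ℝ) (h : ∀ s ∈ S, f s ≤ c) :
    {x ∈ convexHull ℝ (S : Set E) | f x = c} = convexHull ℝ {s | s ∈ S ∧ f s = c} := by
  classical
  apply Set.Subset.antisymm
  · rintro x ⟨hx, hfx⟩
    obtain ⟨w, hw0, hw1, rfl⟩ := Finset.mem_convexHull'.1 hx
    have hz : ∑ y ∈ S, w y * (c - f y) = 0 := by
      simp only [mul_sub, Finset.sum_sub_distrib, ← Finset.sum_mul, hw1]
      rw [map_sum] at hfx
      simp only [map_smul, smul_eq_mul] at hfx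
      linarith
    rw [Finset.sum_eq_zero_iff_of_nonneg
      (fun y hy => mul_nonneg (hw0 y hy) (by linarith [h y hy]))] at hz
    have hzero : ∀ y ∈ S, ¬ f y = c → w y = 0 := fun y hy hne => by
      rcases mul_eq_zero.1 (hz y hy) with h1 | h1
      · exact h1
      · exact absurd (by linarith) hne
    have hset : {s | s ∈ S ∧ f s = c} = ((S.filter (fun s => f s = c) : Finset E) : Set E) := by
      ext; simp
    rw [hset, Finset.mem_convexHull']
    refine ⟨w, fun y hy => hw0 y (Finset.mem_filter.1 hy).1, ?_, ?_⟩
    · rw [← hw1]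
      refine Finset.sum_subset (Finset.filter_subset _ _) fun y hy hn => hzero y hy fun hc => ?_
      exact hn (Finset.mem_filter.2 ⟨hy, hc⟩)
    · refine Finset.sum_subset (Finset.filter_subset _ _) fun y hy hn => ?_
      rw [hzero y hy fun hc => hn (Finset.mem_filter.2 ⟨hy, hc⟩), zero_smul]
  · intro x hx
    refine ⟨convexHull_mono (fun s hs => hs.1) hx, ?_⟩
    exact convexHull_min (t := {x | f x = c}) (fun s hs => hs.2)
      (convex_hyperplane f.isLinear c) hx

theorem le_on_convexHull {E : Type*} [AddCommGroup E] [Module ℝ E] (S : Finset E)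
    (f : E →ₗ[ℝ] ℝ) (c : ℝ) (h : ∀ s ∈ S, f s ≤ c) : ∀ x ∈ convexHull ℝ (S : Set E), f x ≤ c :=
  fun _ hx => convexHull_min (t := {x | f x ≤ c}) h (convex_halfSpace_le f.isLinear c) hx

theorem vectorSpan_convexHull_eq {E : Type*} [AddCommGroup E] [Module ℝ E] (S : Set E) {v : E}
    (hv : v ∈ S) : vectorSpan ℝ (convexHull ℝ S) = Submodule.span ℝ ((fun s => s - v) '' S) := by
  rw [← direction_affineSpan, affineSpan_convexHull, direction_affineSpan,
    vectorSpan_eq_span_vsub_set_right ℝ hv]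
  rfl

theorem exists_exposing {n : ℕ} {P : Set (Fin n → ℝ)} (hd : 0 < sdim P) {v : Fin n → ℝ}
    (hv : IsVertex P v) : v ∈ P ∧ ∃ g : (Fin n → ℝ) →ₗ[ℝ] ℝ, ∀ x ∈ P, x ≠ v → g x < g v := by
  rcases hv with h | h | ⟨f, c, hle, heq⟩
  · exact absurd h (Set.singleton_ne_empty v)
  · rw [← h] at hd
    rw [sdim, vectorSpan_singleton, finrank_bot] at hd
    exact absurd hd (lt_irrefl 0)
  · have hvm : v ∈ {x ∈ P | f x = c} := by rw [← heq]; rfl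
    refine ⟨hvm.1, f, fun x hx hne => lt_of_le_of_ne (hvm.2 ▸ hle x hx) fun h => hne ?_⟩
    have : x ∈ ({v} : Set _) := by rw [heq]; exact ⟨hx, h.trans hvm.2⟩
    exact this

theorem isVertex_of_exposing {n : ℕ} (S : Finset (Fin n → ℝ)) {v : Fin n → ℝ} (hv : v ∈ S)
    (g : (Fin n → ℝ) →ₗ[ℝ] ℝ) (hg : ∀ s ∈ S, s ≠ v → g s < g v) :
    IsVertex (convexHull ℝ (S : Set (Fin n → ℝ))) v := by
  have hle : ∀ s ∈ S, g s ≤ g v := fun s hs => by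
    by_cases h : s = v
    · rw [h]
    · exact (hg s hs h).le
  refine Or.inr (Or.inr ⟨g, g v, le_on_convexHull S g _ hle, ?_⟩)
  rw [face_convexHull S g _ hle]
  have : {s | s ∈ S ∧ g s = g v} = {v} := by
    ext s
    simp only [Set.mem_ofPred_eq, Set.mem_singleton_iff]
    exact ⟨fun h => by_contra fun hne => (hg s h.1 hne).ne h.2, fun h => by simp [h, hv]⟩
  rw [this, convexHull_singleton]

theorem vertex_mem_generators {n : ℕ} (S : Finset (Fin n → ℝ)) {v : Fin n → ℝ}
    (hd : 0 < sdim (convexHull ℝ (S : Set (Fin n → ℝ))))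
    (hv : IsVertex (convexHull ℝ (S : Set (Fin n → ℝ))) v) : v ∈ S := by
  obtain ⟨hvP, g, hg⟩ := exists_exposing hd hv
  by_contra hvS
  have hsub : (S : Set (Fin n → ℝ)) ⊆ {x | g x < g v} := fun s hs =>
    hg s (subset_convexHull ℝ _ hs) fun h => hvS (h ▸ hs)
  have : g v < g v := convexHull_min hsub (convex_halfSpace_lt g.isLinear _) hvP
  exact lt_irrefl _ this

theorem exists_facet_functional {n : ℕ} {P F : Set (Fin n → ℝ)} (hF : IsFacet P F) :
    ∃ (f : (Fin n → ℝ) →ₗ[ℝ] ℝ) (c : ℝ), (∀ x ∈ P, f x ≤ c) ∧ F = {x ∈ P | f x = c} := by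
  obtain ⟨h | h | h, hne, hdim⟩ := hF
  · exact absurd h hne.ne_empty
  · rw [h] at hdim; omega
  · exact h

/-! ### Vertices and edges of simple polytopes -/

/-- At a vertex `v` of a simple polytope, the functionals of the facets through `v` separate the
points of the direction space, and for each facet `G` through `v` some generator lies on all the
other facets through `v` but not on `G`. -/
theorem vertex_local {n : ℕ} (S : Finset (Fin n → ℝ)) {P : Set (Fin n → ℝ)}
    (hP : P = convexHull ℝ (S : Set (Fin n → ℝ))) (hd : 0 < sdim P) (hsimple : IsSimplePolytope P)
    (φ : Set (Fin n → ℝ) → (Fin n → ℝ) →ₗ[ℝ] ℝ) (c : Set (Fin n → ℝ) → ℝ)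
    (hφ : ∀ F, IsFacet P F → (∀ x ∈ P, φ F x ≤ c F) ∧ F = {x ∈ P | φ F x = c F})
    {v : Fin n → ℝ} (hv : IsVertex P v) :
    (∀ z ∈ vectorSpan ℝ P, (∀ F, IsFacet P F → v ∈ F → φ F z = 0) → z = 0) ∧
    ∀ G, IsFacet P G → v ∈ G →
      ∃ s ∈ S, (∀ F, IsFacet P F → v ∈ F → F ≠ G → s ∈ F) ∧ s ∉ G := by
  classical
  have hvS : v ∈ S := vertex_mem_generators S (hP ▸ hd) (hP ▸ hv)
  have hSP : ∀ s ∈ S, s ∈ P := fun s hs => hP ▸ subset_convexHull ℝ _ hs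
  have hmemF : ∀ F, IsFacet P F → ∀ x, x ∈ F ↔ x ∈ P ∧ φ F x = c F := fun F hF x =>
    Set.ext_iff.1 (hφ F hF).2 x
  obtain ⟨hvP, g, hg⟩ := exists_exposing hd hv
  set V := vectorSpan ℝ P with hV
  have hVmem : ∀ x ∈ P, x - v ∈ V := fun x hx => vsub_mem_vectorSpan ℝ hx hvP
  set T : Finset V := S.attach.image (fun s => ⟨s.1 - v, hVmem _ (hSP _ s.2)⟩) with hTdef
  have hTmem : ∀ t : V, t ∈ T ↔ ∃ s ∈ S, s - v = t.1 := by
    intro t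
    simp only [hTdef, Finset.mem_image, Finset.mem_attach, true_and, Subtype.exists, Subtype.ext_iff]
    simp
  have hspan : ∀ A : Set (Fin n → ℝ), A ⊆ S → v ∈ A → ∀ B : Set V,
      (∀ t, t ∈ B ↔ ∃ s ∈ A, s - v = t.1) →
      (Submodule.span ℝ B).map V.subtype = vectorSpan ℝ (convexHull ℝ A) := by
    intro A hA hvA B hB
    rw [vectorSpan_convexHull_eq A hvA, Submodule.map_span]
    congr 1
    ext z
    simp only [Set.mem_image, Submodule.subtype_apply, hB]
    constructor
    · rintro ⟨t, ht, rfl⟩; exact ht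
    · rintro ⟨s, hs, rfl⟩
      exact ⟨⟨s - v, hVmem _ (hSP _ (hA hs))⟩, ⟨s, hs, rfl⟩, rfl⟩
  have hT : Submodule.span ℝ (T : Set V) = ⊤ := by
    apply Submodule.map_injective_of_injective V.injective_subtype
    rw [hspan S subset_rfl hvS T (fun t => by simpa using hTmem t), ← hP, Submodule.map_subtype_top]
  have hfin : {F | IsFacet P F ∧ v ∈ F}.Finite :=
    Set.finite_of_ncard_pos (by rw [hsimple v hv]; exact hd)
  have : Fintype {F | IsFacet P F ∧ v ∈ F} := hfin.fintype
  obtain ⟨hker, hex⟩ := simple_cone T hT (g ∘ₗ V.subtype) (by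
      intro t ht ht0
      obtain ⟨s, hs, hst⟩ := (hTmem t).1 ht
      have : g s < g v := hg s (hSP s hs) fun h => ht0 (Subtype.ext (by simp [← hst, h]))
      simpa [← hst] using this)
    (fun F : {F | IsFacet P F ∧ v ∈ F} => φ F.1 ∘ₗ V.subtype)
    (by
      rintro ⟨F, hF, hvF⟩ t ht
      obtain ⟨s, hs, hst⟩ := (hTmem t).1 ht
      have h1 := (hφ F hF).1 s (hSP s hs)
      have h2 := ((hmemF F hF v).1 hvF).2
      simp only [LinearMap.comp_apply, Submodule.subtype_apply, ← hst, map_sub]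
      linarith)
    (by
      rw [← Nat.card_eq_fintype_card, Nat.card_coe_set_eq, hsimple v hv, sdim])
    (by
      intro f hf0 hf hfr
      obtain ⟨f', hf'⟩ := LinearMap.exists_extend f
      have hff : ∀ t : V, f t = f' t.1 := fun t => by rw [← hf']; rfl
      have hle : ∀ s ∈ S, f' s ≤ f' v := by
        intro s hs
        have := hf ⟨s - v, hVmem _ (hSP _ hs)⟩ ((hTmem _).2 ⟨s, hs, rfl⟩)
        rw [hff, map_sub] at this
        linarith
      have hFeq : {x ∈ P | f' x = f' v} = convexHull ℝ {s | s ∈ S ∧ f' s = f' v} := by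
        rw [hP]; exact face_convexHull S f' _ hle
      have hF : IsFacet P {x ∈ P | f' x = f' v} := by
        refine ⟨Or.inr (Or.inr ⟨f', f' v, hP ▸ le_on_convexHull S f' _ hle, rfl⟩),
          ⟨v, hvP, rfl⟩, ?_⟩
        rw [sdim, sdim, ← hV, ← hfr, hFeq, ← hspan {s | s ∈ S ∧ f' s = f' v} (fun s hs => hs.1)
          ⟨hvS, rfl⟩ {t | t ∈ T ∧ f t = 0} ?_, Submodule.finrank_map_subtype_eq]
        intro t
        simp only [Set.mem_ofPred_eq, hTmem]
        constructor
        · rintro ⟨⟨s, hs, hst⟩, ht⟩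
          refine ⟨s, ⟨hs, ?_⟩, hst⟩
          rw [hff, ← hst, map_sub] at ht
          linarith
        · rintro ⟨s, ⟨hs, hs2⟩, hst⟩
          exact ⟨⟨s, hs, hst⟩, by rw [hff, ← hst, map_sub, hs2, sub_self]⟩
      set F := {x ∈ P | f' x = f' v} with hFdef
      have hvF : v ∈ F := ⟨hvP, rfl⟩
      have hφv := ((hmemF F hF v).1 hvF).2
      refine ⟨⟨F, hF, hvF⟩, fun h0 => ?_, fun t ht ht0 => ?_⟩
      · -- a functional vanishing on `V` would have all of `P` as its face
        have hPF : F = P := by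
          refine Set.Subset.antisymm (fun x hx => hx.1) fun x hx => (hmemF F hF x).2 ⟨hx, ?_⟩
          have := LinearMap.congr_fun h0 ⟨x - v, hVmem x hx⟩
          simp only [LinearMap.comp_apply, Submodule.subtype_apply, map_sub,
            LinearMap.zero_apply] at this
          linarith
        have := hF.2.2
        rw [hPF] at this
        omega
      · obtain ⟨s, hs, hst⟩ := (hTmem t).1 ht
        have hsF : s ∈ F := by
          refine ⟨hSP s hs, ?_⟩
          rw [hff, ← hst, map_sub] at ht0
          linarith
        have := ((hmemF F hF s).1 hsF).2
        simp only [LinearMap.comp_apply, Submodule.subtype_apply, ← hst, map_sub]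
        linarith)
  refine ⟨fun z hz h => ?_, fun G hG hvG => ?_⟩
  · have := hker ⟨z, hz⟩ fun F => h F.1 F.2.1 F.2.2
    simpa using this
  · obtain ⟨t, ht, h1, h2⟩ := hex ⟨G, hG, hvG⟩
    obtain ⟨s, hs, hst⟩ := (hTmem t).1 ht
    refine ⟨s, hs, fun F hF hvF hne => ?_, fun hsG => ?_⟩
    · have h3 := h1 ⟨F, hF, hvF⟩ (fun h => hne (congrArg Subtype.val h))
      simp only [LinearMap.comp_apply, Submodule.subtype_apply, ← hst, map_sub] at h3
      have h4 := ((hmemF F hF v).1 hvF).2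
      exact (hmemF F hF s).2 ⟨hSP s hs, by linarith⟩
    · simp only [LinearMap.comp_apply, Submodule.subtype_apply, ← hst, map_sub] at h2
      have h4 := ((hmemF G hG v).1 hvG).2
      have h5 := ((hmemF G hG s).1 hsG).2
      linarith

/-- All facets through the vertex `v` except `G` have precisely two vertices in common: `v` and the
other end `m` of the edge which they define. -/
theorem edge_vertices {n : ℕ} (S : Finset (Fin n → ℝ)) {P : Set (Fin n → ℝ)}
    (hP : P = convexHull ℝ (S : Set (Fin n → ℝ))) (hd : 0 < sdim P) (hsimple : IsSimplePolytope P)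
    {v : Fin n → ℝ} (hv : IsVertex P v) {G : Set (Fin n → ℝ)} (hG : IsFacet P G) (hvG : v ∈ G) :
    ∃ m, m ≠ v ∧ ∀ u, (IsVertex P u ∧ ∀ F, IsFacet P F → v ∈ F → F ≠ G → u ∈ F) ↔
      u = v ∨ u = m := by
  classical
  have hex : ∀ F, ∃ (f : (Fin n → ℝ) →ₗ[ℝ] ℝ) (c : ℝ),
      IsFacet P F → (∀ x ∈ P, f x ≤ c) ∧ F = {x ∈ P | f x = c} := by
    intro F
    by_cases hF : IsFacet P F
    · obtain ⟨f, c, h⟩ := exists_facet_functional hF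
      exact ⟨f, c, fun _ => h⟩
    · exact ⟨0, 0, fun h => absurd h hF⟩
  choose φ c hφ using hex
  obtain ⟨hker, hedge⟩ := vertex_local S hP hd hsimple φ c hφ hv
  obtain ⟨s₀, hs₀, hs₀F, hs₀G⟩ := hedge G hG hvG
  have hSP : ∀ s ∈ S, s ∈ P := fun s hs => hP ▸ subset_convexHull ℝ _ hs
  have hvP := (exists_exposing hd hv).1
  have hmemF : ∀ F, IsFacet P F → ∀ x, x ∈ F ↔ x ∈ P ∧ φ F x = c F := fun F hF x =>
    Set.ext_iff.1 (hφ F hF).2 x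
  have hGv := ((hmemF G hG v).1 hvG).2
  -- `m` is the generator on the edge farthest from `G`
  set Q := S.filter (fun s => ∀ F, IsFacet P F → v ∈ F → F ≠ G → s ∈ F) with hQ
  obtain ⟨m, hmQ, hmin⟩ := Q.exists_min_image (φ G) ⟨s₀, Finset.mem_filter.2 ⟨hs₀, hs₀F⟩⟩
  obtain ⟨hmS, hmF⟩ := Finset.mem_filter.1 hmQ
  have hlt : φ G m < φ G v := by
    refine (hmin s₀ (Finset.mem_filter.2 ⟨hs₀, hs₀F⟩)).trans_lt (lt_of_le_of_ne ?_ fun h => ?_)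
    · rw [hGv]; exact (hφ G hG).1 _ (hSP _ hs₀)
    · exact hs₀G ((hmemF G hG s₀).2 ⟨hSP _ hs₀, h.trans hGv⟩)
  -- the edge is contained in the line through `v` and `m`
  have hline : ∀ u ∈ P, (∀ F, IsFacet P F → v ∈ F → F ≠ G → u ∈ F) →
      u - v = ((φ G u - φ G v) / (φ G m - φ G v)) • (m - v) := by
    intro u hu huF
    rw [← sub_eq_zero]
    refine hker _ (Submodule.sub_mem _ (vsub_mem_vectorSpan ℝ hu hvP)
      (Submodule.smul_mem _ _ (vsub_mem_vectorSpan ℝ (hSP m hmS) hvP))) fun F hF hvF => ?_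
    by_cases hFG : F = G
    · subst hFG
      have : φ F m - φ F v ≠ 0 := by linarith
      simp only [map_sub, map_smul, smul_eq_mul]
      field_simp
      ring
    · have h1 := ((hmemF F hF u).1 (huF F hF hvF hFG)).2
      have h2 := ((hmemF F hF v).1 hvF).2
      have h3 := ((hmemF F hF m).1 (hmF F hF hvF hFG)).2
      simp [h1, h2, h3]
  refine ⟨m, fun h => by rw [h] at hlt; exact lt_irrefl _ hlt, fun u => ⟨?_, ?_⟩⟩
  · rintro ⟨hu, huF⟩
    -- a point strictly between `v` and `m` is not exposed by any functional
    by_contra! hne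
    obtain ⟨huP, g, hg⟩ := exists_exposing hd hu
    have huS : u ∈ S := vertex_mem_generators S (hP ▸ hd) (hP ▸ hu)
    have h1 := hmin u (Finset.mem_filter.2 ⟨huS, huF⟩)
    have h2 : φ G u ≤ φ G v := by rw [hGv]; exact (hφ G hG).1 _ huP
    have h3 := congrArg g (hline u huP huF)
    set a := (φ G u - φ G v) / (φ G m - φ G v) with ha
    have ha0 : 0 ≤ a := div_nonneg_of_nonpos (by linarith) (by linarith)
    have ha1 : a ≤ 1 := by
      rw [ha, div_le_one_of_neg (by linarith)]; linarith
    have h4 := hg v hvP hne.1.symm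
    have h5 := hg m (hSP m hmS) hne.2.symm
    simp only [map_sub, map_smul, smul_eq_mul] at h3
    rcases ha0.eq_or_lt with h0 | h0
    · rw [← h0] at h3
      linarith
    · have h6 := mul_pos h0 (sub_pos.2 h5)
      have h7 := mul_nonneg (sub_nonneg.2 ha1) (sub_pos.2 h4).le
      nlinarith
  · rintro (rfl | rfl)
    · exact ⟨hv, fun F _ h _ => h⟩
    refine ⟨?_, hmF⟩
    -- the sum of the functionals defining the edge, tilted slightly away from `v`, exposes `m`
    have hfin : {F | IsFacet P F ∧ v ∈ F}.Finite :=
      Set.finite_of_ncard_pos (by rw [hsimple v hv]; exact hd)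
    set ψ := ∑ F ∈ hfin.toFinset.erase G, φ F with hψ
    have hterm : ∀ s ∈ S, ∀ F ∈ hfin.toFinset.erase G, φ F (s - u) ≤ 0 := by
      intro s hs F hF
      simp only [Finset.mem_erase, Set.Finite.mem_toFinset] at hF
      have h1 := (hφ F hF.2.1).1 s (hSP s hs)
      have h2 := ((hmemF F hF.2.1 u).1 (hmF F hF.2.1 hF.2.2 hF.1)).2
      rw [map_sub]; linarith
    obtain ⟨ε, hε, hneg⟩ := exists_perturb (S.image (fun s => s - u)) ψ (-φ G)
      (by
        intro t ht
        obtain ⟨s, hs, rfl⟩ := Finset.mem_image.1 ht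
        rw [hψ, LinearMap.sum_apply]
        exact Finset.sum_nonpos (hterm s hs))
      (by
        intro t ht ht0 h0
        obtain ⟨s, hs, rfl⟩ := Finset.mem_image.1 ht
        rw [hψ, LinearMap.sum_apply, Finset.sum_eq_zero_iff_of_nonpos (hterm s hs)] at h0
        have hsF : ∀ F, IsFacet P F → v ∈ F → F ≠ G → s ∈ F := by
          intro F hF hvF hne
          have h1 := h0 F (by simp [hne, hF, hvF])
          have h2 := ((hmemF F hF u).1 (hmF F hF hvF hne)).2
          rw [map_sub] at h1
          exact (hmemF F hF s).2 ⟨hSP s hs, by linarith⟩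
        have h3 := hmin s (Finset.mem_filter.2 ⟨hs, hsF⟩)
        have h4 : φ G s ≠ φ G u := by
          intro h
          have h5 := hline s (hSP s hs) hsF
          rw [h, div_self (by linarith), one_smul] at h5
          exact ht0 (by rw [sub_left_injective h5, sub_self])
        have h6 := lt_of_le_of_ne h3 h4.symm
        simp only [LinearMap.neg_apply, map_sub]
        linarith)
    rw [hP]
    refine isVertex_of_exposing S hmS (ψ + ε • (-φ G)) fun s hs hne => ?_
    have := hneg (s - u) (Finset.mem_image_of_mem _ hs) (sub_ne_zero.2 hne)
    rw [map_sub] at this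
    linarith

/-! ### The parity theorem -/

theorem stmt2 {n d : ℕ} (hd : 1 < d) (P : Set (Fin n → ℝ))
    (hP : IsPolytope P) (hdim : sdim P = d) (hsimple : IsSimplePolytope P)
    (hfacets : {F | IsFacet P F}.ncard = 2 * d) :
    Even {p : Set (Fin n → ℝ) | ∃ u v : Fin n → ℝ, u ≠ v ∧
      IsVertex P u ∧ IsVertex P v ∧ Complementary P u v ∧
      p = {u, v}}.ncard := by
  classical
  obtain ⟨S, hS⟩ := hP
  have hd0 : 0 < sdim P := by omega
  have hVfin : {v | IsVertex P v}.Finite := S.finite_toSet.subset fun v hv =>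
    vertex_mem_generators S (hS ▸ hd0) (hS ▸ hv)
  have hXfin : {F | IsFacet P F}.Finite := Set.finite_of_ncard_pos (by omega)
  have : Fintype {v | IsVertex P v} := hVfin.fintype
  have : Fintype {F | IsFacet P F} := hXfin.fintype
  have hX : Fintype.card {F | IsFacet P F} = 2 * d := by
    rw [← hfacets, ← Nat.card_eq_fintype_card, Nat.card_coe_set_eq]
  set A : {v | IsVertex P v} → Finset {F | IsFacet P F} :=
    fun v => Finset.univ.filter (fun F => v.1 ∈ F.1) with hAdef
  have hmemA : ∀ v F, F ∈ A v ↔ v.1 ∈ F.1 := fun v F => by simp [hAdef]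
  have hA : ∀ v, (A v).card = d := by
    intro v
    rw [← hdim, ← hsimple v.1 v.2, ← Set.ncard_coe_finset,
      ← Set.ncard_image_of_injective _ Subtype.val_injective]
    congr 1
    ext F
    simp only [Set.mem_image, Finset.mem_coe, hmemA, Set.mem_ofPred_eq]
    exact ⟨fun ⟨F', h, h'⟩ => h' ▸ ⟨F'.2, h⟩, fun h => ⟨⟨F, h.1⟩, h.2, rfl⟩⟩
  have hR : ∀ R : Finset {F | IsFacet P F}, R.card + 1 = d →
      Even (Finset.univ.filter (fun v => R ⊆ A v)).card := by
    intro R hRc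
    by_cases hne : ∃ v, R ⊆ A v
    swap
    · push Not at hne
      simp [hne]
    obtain ⟨v, hv⟩ := hne
    have h1 : (A v \ R).card = 1 := by
      rw [Finset.card_sdiff_of_subset hv, hA]; omega
    obtain ⟨G, hG⟩ := Finset.card_eq_one.1 h1
    have hGmem : G ∈ A v \ R := by rw [hG]; simp
    have hRmem : ∀ F, F ∈ R ↔ v.1 ∈ F.1 ∧ F ≠ G := by
      intro F
      rw [← hmemA]
      constructor
      · intro h
        exact ⟨hv h, by rintro rfl; exact (Finset.mem_sdiff.1 hGmem).2 h⟩
      · rintro ⟨h, hne⟩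
        by_contra hnR
        have : F ∈ A v \ R := Finset.mem_sdiff.2 ⟨h, hnR⟩
        rw [hG] at this
        exact hne (Finset.mem_singleton.1 this)
    obtain ⟨m, hmv, hm⟩ := edge_vertices S hS hd0 hsimple v.2 G.2
      ((hmemA _ _).1 (Finset.mem_sdiff.1 hGmem).1)
    have hmV : IsVertex P m := ((hm m).2 (Or.inr rfl)).1
    have hset : Finset.univ.filter (fun u => R ⊆ A u) = {v, ⟨m, hmV⟩} := by
      ext u
      have h2 := hm u.1
      have h3 : R ⊆ A u ↔ (IsVertex P u.1 ∧
          ∀ F, IsFacet P F → v.1 ∈ F → F ≠ G.1 → u.1 ∈ F) := by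
        constructor
        · intro h
          refine ⟨u.2, fun F hF hvF hne => ?_⟩
          exact (hmemA u ⟨F, hF⟩).1 (h ((hRmem ⟨F, hF⟩).2
            ⟨hvF, fun h => hne (congrArg Subtype.val h)⟩))
        · rintro ⟨-, h⟩ F hF
          have := (hRmem F).1 hF
          exact (hmemA u F).2 (h F.1 F.2 this.1 fun h => this.2 (Subtype.ext h))
      simp only [Finset.mem_filter, Finset.mem_univ, true_and, Finset.mem_insert,
        Finset.mem_singleton, Subtype.ext_iff]
      exact h3.trans h2
    rw [hset, Finset.card_pair (fun h => hmv (congrArg Subtype.val h).symm)]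
    exact even_two
  obtain ⟨x⟩ : Nonempty {F | IsFacet P F} := Fintype.card_pos_iff.1 (by omega)
  have hmain := even_complementary hd hX A hA hR x
  have hcompl : ∀ u v : {v | IsVertex P v}, Complementary P u.1 v.1 ↔ A v = (A u)ᶜ := by
    intro u v
    constructor
    · intro h
      refine Finset.eq_of_subset_of_card_le (fun F hF => ?_) ?_
      · rw [Finset.mem_compl]
        intro hF2
        exact h F.1 F.2 ⟨(hmemA _ _).1 hF2, (hmemA _ _).1 hF⟩
      · rw [Finset.card_compl, hX, hA, hA]; omega
    · rintro h F hF ⟨h1, h2⟩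
      have h3 : (⟨F, hF⟩ : {F | IsFacet P F}) ∈ A v := (hmemA _ _).2 h2
      rw [h, Finset.mem_compl] at h3
      exact h3 ((hmemA _ _).2 h1)
  convert hmain using 1
  rw [← Set.ncard_coe_finset]
  symm
  -- the unordered pair `{u, v}` is listed with the vertex avoiding `x` first
  refine Set.ncard_congr (fun p _ => ({p.1.1, p.2.1} : Set (Fin n → ℝ))) ?_ ?_ ?_
  · rintro ⟨u, v⟩ h
    simp only [Finset.coe_filter, Finset.mem_univ, true_and, Set.mem_ofPred_eq] at h
    refine ⟨u.1, v.1, fun huv => ?_, u.2, v.2, (hcompl u v).2 h.2, rfl⟩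
    have huv : u = v := Subtype.ext huv
    subst huv
    apply h.1
    by_contra hx
    exact hx (by rw [h.2]; simpa using hx)
  · rintro ⟨u, v⟩ ⟨u', v'⟩ h h' heq
    simp only [Finset.coe_filter, Finset.mem_univ, true_and, Set.mem_ofPred_eq] at h h'
    rcases Set.pair_eq_pair_iff.1 heq with ⟨h1, h2⟩ | ⟨h1, h2⟩
    · exact Prod.ext (Subtype.ext h1) (Subtype.ext h2)
    · have h1 : u = v' := Subtype.ext h1
      exact absurd (by rw [h'.2]; simpa using h'.1) (h1 ▸ h.1)
  · rintro p ⟨u, v, huv, hu, hv, hc, rfl⟩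
    have hc1 := (hcompl ⟨u, hu⟩ ⟨v, hv⟩).1 hc
    by_cases hx : x ∈ A ⟨u, hu⟩
    · refine ⟨(⟨v, hv⟩, ⟨u, hu⟩), ?_, Set.pair_comm _ _⟩
      simp only [Finset.coe_filter, Finset.mem_univ, true_and, Set.mem_ofPred_eq]
      exact ⟨by rw [hc1]; simpa using hx, by rw [hc1, compl_compl]⟩
    · refine ⟨(⟨u, hu⟩, ⟨v, hv⟩), ?_, rfl⟩
      simp only [Finset.coe_filter, Finset.mem_univ, true_and, Set.mem_ofPred_eq]
      exact ⟨hx, hc1⟩
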